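/- Let (Ω,Σ,P) be a probability space whose measure P has the Darboux property, let λ>0 and κ>0. For any disjoint measurable sets V, W with P(V) ≤ ε(κ)·ε(λ) and P(W) ≤ ε(κ)·ε(λ), there exist two-atom measurable partitions 𝒜 = {A₁,A₂} and ℬ = {B₁,B₂} such that V ⊆ A₁∩B₁, W ⊆ A₂∩B₂, P(A₂)/P(A₁) = λ, P(B₂)/P(B₁) = κ, and 𝒜 ⊥ ℬ. -/

import Mathlib

/-!
Put `a = 1/(1+λ)` and `b = 1/(1+κ)`. It suffices to split `Ω` into four cells of measures
`ab`, `a(1-b)`, `(1-a)b`, `(1-a)(1-b)`, to be read as `Aᵢ ∩ Bⱼ`, with `V` inside the first cell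
and `W` inside the last. Since `ε(λ) = min a (1-a)` and `ε(κ) = min b (1-b)`, both `P V ≤ ab` and
`P W ≤ (1-a)(1-b)` hold. The Darboux property, in the form `Darboux.exists_between`, then enlarges
`V` to a set `C` of measure `ab` avoiding `W`, enlarges `W` to a set `D` of measure `(1-a)(1-b)`
avoiding `C`, and cuts a set `E` of measure `a(1-b)` out of the rest. Take `A₁ = C ∪ E` and
`B₂ = D ∪ E`: they meet exactly in `E`, so they are independent, and independence passes to the
complements (`indep_pairPart_compl`).
-/

open MeasureTheory Filter Topology

namespace APE

variable {Ω : Type*} [MeasurableSpace Ω]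

/-- A finite measurable partition of `Ω`: a finite collection of nonempty pairwise
disjoint measurable sets whose union is `Ω`. -/
def IsFinPart (𝒜 : Finset (Set Ω)) : Prop :=
  (∀ A ∈ 𝒜, MeasurableSet A) ∧ (∀ A ∈ 𝒜, A ≠ ∅) ∧
    (𝒜 : Set (Set Ω)).PairwiseDisjoint id ∧ ⋃₀ (𝒜 : Set (Set Ω)) = Set.univ

/-- The join (common refinement) `𝒜 ∨ ℬ` of two finite partitions. -/
noncomputable def join (𝒜 ℬ : Finset (Set Ω)) : Finset (Set Ω) := by
  classical
  exact ((𝒜 ×ˢ ℬ).image fun p => p.1 ∩ p.2).filter fun s => s ≠ ∅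

/-- Stochastic independence `𝒜 ⊥ ℬ` of two finite partitions. -/
def Indep (P : Measure Ω) (𝒜 ℬ : Finset (Set Ω)) : Prop :=
  ∀ A ∈ 𝒜, ∀ B ∈ ℬ, P (A ∩ B) = P A * P B

/-- An additive partition entropy: `I (𝒜·ℬ) = I 𝒜 + I ℬ` for independent partitions. -/
def IsAPE (P : Measure Ω) (I : Finset (Set Ω) → ℝ) : Prop :=
  ∀ 𝒜 ℬ : Finset (Set Ω), IsFinPart 𝒜 → IsFinPart ℬ → Indep P 𝒜 ℬ →
    I (join 𝒜 ℬ) = I 𝒜 + I ℬ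

/-- Restriction `𝒜|S` of a partition to a set `S`. -/
noncomputable def restr (𝒜 : Finset (Set Ω)) (S : Set Ω) : Finset (Set Ω) := by
  classical
  exact (𝒜.image fun A => A ∩ S).filter fun s => s ≠ ∅

/-- The number `N(𝒜)` of atoms of positive measure. -/
noncomputable def numPos (P : Measure Ω) (𝒜 : Finset (Set Ω)) : ℕ := by
  classical
  exact (𝒜.filter fun A => 0 < P A).card

/-- The pseudometric `D` on finite partitions. -/
noncomputable def Ddist (P : Measure Ω) (𝒜 ℬ : Finset (Set Ω)) : ℝ :=
  sInf ((fun Z => (P Z).toReal) ''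
      {Z : Set Ω | MeasurableSet Z ∧ restr 𝒜 Zᶜ = restr ℬ Zᶜ}) +
    |(numPos P 𝒜 : ℝ) - (numPos P ℬ : ℝ)|

/-- Continuity of `I` with respect to the pseudometric `D`. -/
def CtsD (P : Measure Ω) (I : Finset (Set Ω) → ℝ) : Prop :=
  ∀ 𝒜 : Finset (Set Ω), IsFinPart 𝒜 → ∀ ε : ℝ, 0 < ε → ∃ δ : ℝ, 0 < δ ∧
    ∀ ℬ : Finset (Set Ω), IsFinPart ℬ → Ddist P 𝒜 ℬ < δ → |I ℬ - I 𝒜| < ε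

/-- The two-atom partition `{A, Ω ∖ A}`. -/
noncomputable def twoPart (A : Set Ω) : Finset (Set Ω) := by
  classical
  exact {A, Aᶜ}

/-- Continuity of `I` on the family `𝔄₂` of two-atom partitions. -/
def CtsOnA2 (P : Measure Ω) (I : Finset (Set Ω) → ℝ) : Prop :=
  ∀ (A : Set Ω) (As : ℕ → Set Ω), MeasurableSet A → (∀ n, MeasurableSet (As n)) →
    0 < P A → P A < 1 →
    Tendsto (fun n => (P (symmDiff A (As n))).toReal) atTop (𝓝 0) →
    Tendsto (fun n => I (twoPart (As n))) atTop (𝓝 (I (twoPart A)))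

/-- The Darboux property of a measure. -/
def Darboux (P : Measure Ω) : Prop :=
  ∀ A : Set Ω, MeasurableSet A → ∀ θ : ENNReal, 0 < θ → θ < P A →
    ∃ B : Set Ω, MeasurableSet B ∧ B ⊆ A ∧ P B = θ

/-- Nonatomicity of a measure. -/
def NonAtomic (P : Measure Ω) : Prop :=
  ∀ A : Set Ω, MeasurableSet A → 0 < P A →
    ∃ B : Set Ω, MeasurableSet B ∧ B ⊆ A ∧ 0 < P B ∧ P B < P A

/-- A finitely additive real set function on measurable sets. -/
def FinAdd (m : Set Ω → ℝ) : Prop :=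
  ∀ A B : Set Ω, MeasurableSet A → MeasurableSet B → Disjoint A B →
    m (A ∪ B) = m A + m B

/-- A countably additive real set function on measurable sets. -/
def CountAdd (m : Set Ω → ℝ) : Prop :=
  ∀ f : ℕ → Set Ω, (∀ n, MeasurableSet (f n)) →
    (∀ i j, i ≠ j → Disjoint (f i) (f j)) →
    HasSum (fun n => m (f n)) (m (⋃ n, f n))

/-- Absolute continuity of `m` with respect to `P`. -/
def AbsCont (P : Measure Ω) (m : Set Ω → ℝ) : Prop :=
  ∀ ε : ℝ, 0 < ε → ∃ δ : ℝ, 0 < δ ∧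
    ∀ A : Set Ω, MeasurableSet A → (P A).toReal < δ → |m A| < ε

/-- The entropy `L_m(𝒜) = Σ_{A∈𝒜} m(A)·log₂(1/P(A))`.  (If `P A = 0` then the
corresponding term vanishes: `m A = 0` for `m` vanishing on null sets, which
implements the convention `0·(+∞) = 0`.) -/
noncomputable def Lm (P : Measure Ω) (m : Set Ω → ℝ) (𝒜 : Finset (Set Ω)) : ℝ :=
  ∑ A ∈ 𝒜, m A * Real.logb 2 (1 / (P A).toReal)

/-- Two partitions have the same measures of atoms. -/
def SameMeasures (P : Measure Ω) (𝒜 ℬ : Finset (Set Ω)) : Prop :=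
  ∃ e : {A : Set Ω // A ∈ 𝒜} ≃ {B : Set Ω // B ∈ ℬ}, ∀ A, P (e A).1 = P A.1

/-- `I` depends solely on the measures of atoms. -/
def DependsOnMeasures (P : Measure Ω) (I : Finset (Set Ω) → ℝ) : Prop :=
  ∀ 𝒜 ℬ : Finset (Set Ω), IsFinPart 𝒜 → IsFinPart ℬ → SameMeasures P 𝒜 ℬ → I 𝒜 = I ℬ

/-- The operation `T_{V,W}`, replacing the atom `A₁ ⊇ V` by `(A₁∖V)∪W` and the atom
`A₂ ⊇ W` by `(A₂∖W)∪V`. -/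
noncomputable def swap (V W A₁ A₂ : Set Ω) (𝒜 : Finset (Set Ω)) : Finset (Set Ω) := by
  classical
  exact insert ((A₁ \ V) ∪ W) (insert ((A₂ \ W) ∪ V) ((𝒜.erase A₁).erase A₂))

/-- `ε(λ) = min (1/(1+λ)) (1/(1+λ⁻¹))`. -/
noncomputable def epsFun (lam : ℝ) : ℝ := min (1 / (1 + lam)) (1 / (1 + lam⁻¹))

/-- An indexed finite measurable partition. -/
def IsPartIdx {n : ℕ} (A : Fin n → Set Ω) : Prop :=
  (∀ i, MeasurableSet (A i)) ∧ (∀ i, A i ≠ ∅) ∧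
    (∀ i j, i ≠ j → Disjoint (A i) (A j)) ∧ (⋃ i, A i) = Set.univ

/-- The finset of atoms of an indexed partition. -/
noncomputable def idxFinset {n : ℕ} (A : Fin n → Set Ω) : Finset (Set Ω) := by
  classical
  exact Finset.univ.image A

/-- The two-atom family `{A, B}`. -/
noncomputable def pairPart (A B : Set Ω) : Finset (Set Ω) := by
  classical
  exact {A, B}

/-- Membership of `𝒜` in `F_λ(V,W)`, with designated distinct atoms `A₁ ⊇ V`,
`A₂ ⊇ W` such that `P(A₂)/P(A₁) = λ`. -/
def memF (P : Measure Ω) (V W : Set Ω) (lam : ℝ) (𝒜 : Finset (Set Ω))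
    (A₁ A₂ : Set Ω) : Prop :=
  IsFinPart 𝒜 ∧ A₁ ∈ 𝒜 ∧ A₂ ∈ 𝒜 ∧ A₁ ≠ A₂ ∧ V ⊆ A₁ ∧ W ⊆ A₂ ∧
    (P A₂).toReal / (P A₁).toReal = lam

/-- Measurable sets with rational measure. -/
def InRat (P : Measure Ω) (A : Set Ω) : Prop :=
  MeasurableSet A ∧ ∃ q : ℚ, (P A).toReal = (q : ℝ)

/-- The characteristic properties of `Δ(V,W,λ)` associated with an additive
partition entropy `I` (Proposition 3 of the paper). -/
def DeltaSpec (P : Measure Ω) (I : Finset (Set Ω) → ℝ)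
    (Δ : Set Ω → Set Ω → ℝ → ℝ) : Prop :=
  (∀ V W : Set Ω, ∀ lam : ℝ, MeasurableSet V → MeasurableSet W → P V = P W →
      0 < lam → Disjoint V W →
      ∀ 𝒜 A₁ A₂, memF P V W lam 𝒜 A₁ A₂ →
        Δ V W lam = I (swap V W A₁ A₂ 𝒜) - I 𝒜) ∧
  (∀ U V W : Set Ω, ∀ lam : ℝ, MeasurableSet U → MeasurableSet V → MeasurableSet W →
      P U = P V → P V = P W → 0 < lam →
      Δ U W lam = Δ U V lam + Δ V W lam) ∧
  (∀ V₁ V₂ W₁ W₂ : Set Ω, ∀ lam : ℝ, MeasurableSet V₁ → MeasurableSet V₂ →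
      MeasurableSet W₁ → MeasurableSet W₂ → Disjoint V₁ V₂ → Disjoint W₁ W₂ →
      P V₁ = P W₁ → P V₂ = P W₂ → 0 < lam →
      Δ (V₁ ∪ V₂) (W₁ ∪ W₂) lam = Δ V₁ W₁ lam + Δ V₂ W₂ lam) ∧
  (∀ V W : Set Ω, ∀ kap lam : ℝ, MeasurableSet V → MeasurableSet W → P V = P W →
      0 < kap → 0 < lam →
      Δ V W (kap * lam) = Δ V W kap + Δ V W lam)

/-- The Darboux property in interpolation form: every value between `P V` and `P U` is the
measure of a set lying between `V` and `U`, endpoints included. -/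
theorem Darboux.exists_between {Ω : Type*} [MeasurableSpace Ω] {P : Measure Ω}
    [IsProbabilityMeasure P] (hD : Darboux P) {V U : Set Ω} (hV : MeasurableSet V)
    (hU : MeasurableSet U) (hVU : V ⊆ U) {t : ℝ} (h1 : P.real V ≤ t) (h2 : t ≤ P.real U) :
    ∃ B, MeasurableSet B ∧ V ⊆ B ∧ B ⊆ U ∧ P.real B = t := by
  rcases h1.eq_or_lt with h1 | h1
  · exact ⟨V, hV, subset_rfl, hVU, h1⟩
  rcases h2.eq_or_lt with h2 | h2
  · exact ⟨U, hU, hVU, subset_rfl, h2.symm⟩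
  have hdiff : P.real (U \ V) = P.real U - P.real V := measureReal_sdiff hVU hV
  obtain ⟨B, hB, hBU, hPB⟩ := hD (U \ V) (hU.diff hV) (ENNReal.ofReal (t - P.real V))
    (by simpa using h1)
    (by
      rw [ENNReal.ofReal_lt_iff_lt_toReal (by linarith) (measure_ne_top _ _)]
      change _ < P.real (U \ V)
      linarith)
  refine ⟨V ∪ B, hV.union hB, Set.subset_union_left,
    Set.union_subset hVU (hBU.trans Set.sdiff_subset), ?_⟩
  have hdisj : Disjoint V B := Set.disjoint_sdiff_right.mono_right hBU
  have hPB' : P.real B = t - P.real V := by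
    rw [measureReal_def, hPB, ENNReal.toReal_ofReal (by linarith)]
  rw [measureReal_union hdisj hB, hPB']
  ring

/-- Independence of two events passes to complements, so a single product identity gives
independence of the two-atom partitions. -/
theorem indep_pairPart_compl {Ω : Type*} [MeasurableSpace Ω] {P : Measure Ω}
    [IsProbabilityMeasure P] {A B : Set Ω} (hA : MeasurableSet A) (hB : MeasurableSet B)
    (h : P.real (A ∩ B) = P.real A * P.real B) :
    Indep P (pairPart A Aᶜ) (pairPart Bᶜ B) := by
  have key : ∀ X Y : Set Ω, P.real (X ∩ Y) = P.real X * P.real Y →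
      P (X ∩ Y) = P X * P Y := by
    intro X Y hXY
    rw [← ENNReal.toReal_eq_toReal_iff' (measure_ne_top _ _)
      (ENNReal.mul_ne_top (measure_ne_top _ _) (measure_ne_top _ _)), ENNReal.toReal_mul]
    exact hXY
  have e1 : P.real (A ∩ B) + P.real (A ∩ Bᶜ) = P.real A := measureReal_inter_add_sdiff hB
  have e2 : P.real (B ∩ A) + P.real (B ∩ Aᶜ) = P.real B := measureReal_inter_add_sdiff hA
  have e3 : P.real (Aᶜ ∩ B) + P.real (Aᶜ ∩ Bᶜ) = P.real Aᶜ := measureReal_inter_add_sdiff hB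
  have cA : P.real Aᶜ = 1 - P.real A := probReal_compl_eq_one_sub hA
  have cB : P.real Bᶜ = 1 - P.real B := probReal_compl_eq_one_sub hB
  rw [Set.inter_comm B A, Set.inter_comm B Aᶜ] at e2
  intro X hX Y hY
  simp only [pairPart, Finset.mem_insert, Finset.mem_singleton] at hX hY
  rcases hX with rfl | rfl <;> rcases hY with rfl | rfl <;> apply key
  · rw [cB]; linarith
  · exact h
  · rw [cA] at e3; rw [cA, cB]; linarith
  · rw [cA]; linarith

/-- `1 / (1 + x)` and `1 / (1 + x⁻¹)` are the two weights with ratio `x` summing to `1`. -/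
theorem one_div_one_add_inv {x : ℝ} (hx : 0 < x) : 1 / (1 + x⁻¹) = 1 - 1 / (1 + x) := by
  field_simp
  ring

/-- Lemma `ε(λ)` C: existence of two independent two-atom
partitions with ratios `λ` and `κ` separating two small disjoint sets. -/
theorem exists_two_indep_twoAtom_sep
    {Ω : Type*} [MeasurableSpace Ω] (P : Measure Ω) [IsProbabilityMeasure P]
    (hD : Darboux P) (lam kap : ℝ) (hlam : 0 < lam) (hkap : 0 < kap)
    (V W : Set Ω) (hV : MeasurableSet V) (hW : MeasurableSet W)
    (hdisj : Disjoint V W)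
    (hPV : (P V).toReal ≤ epsFun kap * epsFun lam)
    (hPW : (P W).toReal ≤ epsFun kap * epsFun lam) :
    ∃ A₁ A₂ B₁ B₂ : Set Ω,
      MeasurableSet A₁ ∧ MeasurableSet A₂ ∧ MeasurableSet B₁ ∧ MeasurableSet B₂ ∧
      A₁ ≠ ∅ ∧ A₂ ≠ ∅ ∧ B₁ ≠ ∅ ∧ B₂ ≠ ∅ ∧
      Disjoint A₁ A₂ ∧ A₁ ∪ A₂ = Set.univ ∧
      Disjoint B₁ B₂ ∧ B₁ ∪ B₂ = Set.univ ∧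
      V ⊆ A₁ ∩ B₁ ∧ W ⊆ A₂ ∩ B₂ ∧
      (P A₂).toReal / (P A₁).toReal = lam ∧
      (P B₂).toReal / (P B₁).toReal = kap ∧
      Indep P (pairPart A₁ A₂) (pairPart B₁ B₂) := by
  set a : ℝ := 1 / (1 + lam) with ha
  set b : ℝ := 1 / (1 + kap) with hb
  have ha0 : 0 < a := by positivity
  have hb0 : 0 < b := by positivity
  have ha' : 1 / (1 + lam⁻¹) = 1 - a := one_div_one_add_inv hlam
  have hb' : 1 / (1 + kap⁻¹) = 1 - b := one_div_one_add_inv hkap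
  have ha1 : 0 < 1 - a := by rw [← ha']; positivity
  have hb1 : 0 < 1 - b := by rw [← hb']; positivity
  simp only [epsFun, ha', hb', ← ha, ← hb] at hPV hPW
  have hPV' : P.real V ≤ a * b := hPV.trans (by
    rw [mul_comm a b]
    gcongr
    · exact min_le_left _ _
    · exact min_le_left _ _)
  have hPW' : P.real W ≤ (1 - a) * (1 - b) := hPW.trans (by
    rw [mul_comm (1 - a)]
    gcongr
    · exact min_le_right _ _
    · exact min_le_right _ _)
  have hab1 : 0 < a * (1 - b) := mul_pos ha0 hb1
  have hab2 : 0 < (1 - a) * b := mul_pos ha1 hb0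
  -- `C`, `D`, `E` are the cells `A₁ ∩ B₁`, `A₂ ∩ B₂`, `A₁ ∩ B₂`.
  obtain ⟨C, hC, hVC, hCW, hPC⟩ := hD.exists_between hV hW.compl
    hdisj.subset_compl_right (t := a * b) hPV'
    (by rw [probReal_compl_eq_one_sub hW]; linarith)
  obtain ⟨D, hDm, hWD, hDC, hPD⟩ := hD.exists_between hW hC.compl
    (Set.subset_compl_comm.mp hCW) (t := (1 - a) * (1 - b)) hPW'
    (by rw [probReal_compl_eq_one_sub hC]; linarith)
  have hdCD : Disjoint C D := (Set.disjoint_left.mpr fun x hx => hDC hx).symm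
  obtain ⟨E, hE, -, hECD, hPE⟩ := hD.exists_between MeasurableSet.empty (hC.union hDm).compl
    (Set.empty_subset _) (t := a * (1 - b)) (by simpa using hab1.le)
    (by
      rw [probReal_compl_eq_one_sub (hC.union hDm), measureReal_union hdCD hDm]
      linarith)
  have hdE : Disjoint (C ∪ D) E := (Set.disjoint_left.mpr fun x hx => hECD hx).symm
  obtain ⟨hdCE, hdDE⟩ := Set.disjoint_union_left.mp hdE
  have hA : MeasurableSet (C ∪ E) := hC.union hE
  have hB : MeasurableSet (D ∪ E) := hDm.union hE
  have hPA : P.real (C ∪ E) = a := by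
    rw [measureReal_union hdCE hE]; linarith
  have hPB : P.real (D ∪ E) = 1 - b := by
    rw [measureReal_union hdDE hE]; linarith
  have hPAc : P.real (C ∪ E)ᶜ = 1 - a := by rw [probReal_compl_eq_one_sub hA, hPA]
  have hPBc : P.real (D ∪ E)ᶜ = b := by rw [probReal_compl_eq_one_sub hB, hPB]; ring
  have hAB : (C ∪ E) ∩ (D ∪ E) = E := by
    rw [← Set.inter_union_distrib_right, hdCD.inter_eq, Set.empty_union]
  have hne : ∀ X : Set Ω, 0 < P.real X → X ≠ ∅ := by
    rintro X hX rfl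
    simp at hX
  refine ⟨C ∪ E, (C ∪ E)ᶜ, (D ∪ E)ᶜ, D ∪ E, hA, hA.compl, hB.compl, hB,
    hne _ (by linarith), hne _ (by linarith), hne _ (by linarith), hne _ (by linarith),
    disjoint_compl_right, Set.union_compl_self _, disjoint_compl_left, Set.compl_union_self _,
    ?_, ?_, ?_, ?_, indep_pairPart_compl hA hB (by rw [hAB, hPA, hPB, hPE])⟩
  · refine hVC.trans (Set.subset_inter Set.subset_union_left ?_)
    exact (hdCD.union_right hdCE).subset_compl_right
  · refine hWD.trans (Set.subset_inter ?_ Set.subset_union_left)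
    exact (hdCD.symm.union_right hdDE).subset_compl_right
  · change P.real (C ∪ E)ᶜ / P.real (C ∪ E) = lam
    rw [hPAc, hPA, ha]
    field_simp
    ring
  · change P.real (D ∪ E) / P.real (D ∪ E)ᶜ = kap
    rw [hPBc, hPB, hb]
    field_simp
    ring

end APE
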